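/- Under the standing hypotheses with g(ν) = α·ν + 1 for some α ∈ ℕ, as x → ∞, M(x) ≥ (√(log x)/log₂ x)·( C_g/√(κ/α) + O(log₃ x / log₂ x) ). -/

import Mathlib

open Filter

/-!
Write `u ν = log (g (ν + 1) / g ν)` and `S = ∑ u ν ^ 2`. For a parameter `N`, the inner value
`f n` is chosen as `∏ ν < N, ∏ j < J ν, q j` with `J ν = ⌊N * u ν⌋`. The exponent of `q j` in this
product is the number of `ν` with `j < J ν`, so summing over the diagram by rows instead gives
`log f(f n) = ∑ J ν * u ν`, which is about `N * S`. Each factor `q j`, counted with multiplicity,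
is produced by a prime power `q i ^ d j` with its own `i`, where `g (d j) = q j` and therefore
`d j` is at most `q j / α`, which is about `κ / α * j * log N`. Since also `log (q i)` is at most
about `log N`, this costs `log n ≈ (κ / α) * (log N) ^ 2 * ∑ J ν ^ 2 / 2`, which is about
`κ / (2 * α) * S * (N * log N) ^ 2`. Choosing the largest `N` for which this stays below `log x`
gives the bound.
-/

section Combinatorics

open Finset

variable {J : ℕ → ℕ}

lemma lt_count_iff_of_antitone {p : ℕ → Prop} [DecidablePred p] (hp : Antitone p) (ν N : ℕ) :
    ν < Nat.count p N ↔ ν < N ∧ p ν := by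
  induction N with
  | zero => simp
  | succ N ih =>
    by_cases hN : p N
    · have hall : ∀ μ < N + 1, p μ := fun μ hμ => hp (Nat.lt_succ_iff.1 hμ) hN
      rw [Nat.count_of_forall hall, iff_self_and]
      exact hall ν
    · rw [Nat.count_succ, if_neg hN, add_zero, ih]
      have : p ν → ν ≠ N := by rintro hν rfl; exact hN hν
      grind

/-- Reading a Young diagram with row lengths `J ν` by columns instead of by rows. -/
@[to_additive]
lemma prod_range_prod_range_comm_of_antitone {M : Type*} [CommMonoid M] (hJ : Antitone J)
    (N : ℕ) (F : ℕ → ℕ → M) :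
    ∏ ν ∈ range N, ∏ j ∈ range (J ν), F ν j =
      ∏ j ∈ range (J 0), ∏ ν ∈ range (Nat.count (fun ν => j < J ν) N), F ν j := by
  refine prod_comm' fun ν j => ?_
  have hanti : Antitone fun ν => j < J ν := fun _ _ hμν hj => hj.trans_le (hJ hμν)
  simp only [mem_range, lt_count_iff_of_antitone hanti]
  exact ⟨fun h => ⟨h, h.2.trans_le (hJ ν.zero_le)⟩, And.left⟩

end Combinatorics

section Growth

open Finset Real

/-- The increment `log (g (j + 1) / g j)` of `log g`. -/
noncomputable def logIncrement (g : ℕ → ℕ) (j : ℕ) : ℝ :=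
  log ((g (j + 1) : ℝ) / (g j : ℝ))

/-- An increasing log-concave function `g` with `g 0 = 1` and linear growth
`α * ν ≤ g ν ≤ β * ν`; the affine functions `ν ↦ α * ν + 1` are the motivating example. -/
structure IsLogConcaveLinear (g : ℕ → ℕ) (α β : ℝ) : Prop where
  map_zero : g 0 = 1
  monotone : Monotone g
  logConcave : ∀ ν, g ν * g (ν + 2) ≤ g (ν + 1) ^ 2
  slope_pos : 0 < α
  lower : ∀ ν, α * ν ≤ g ν
  upper : ∀ ν, 1 ≤ ν → (g ν : ℝ) ≤ β * ν

namespace IsLogConcaveLinear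

variable {g : ℕ → ℕ} {α β : ℝ}

lemma pos (hg : IsLogConcaveLinear g α β) (ν : ℕ) : 0 < g ν :=
  (Nat.zero_lt_one.trans_eq hg.map_zero.symm).trans_le (hg.monotone ν.zero_le)

lemma cast_pos (hg : IsLogConcaveLinear g α β) (ν : ℕ) : (0 : ℝ) < g ν :=
  Nat.cast_pos.2 (hg.pos ν)

lemma upper_slope_pos (hg : IsLogConcaveLinear g α β) : 0 < β := by
  simpa using (hg.cast_pos 1).trans_le (hg.upper 1 le_rfl)

lemma logIncrement_nonneg (hg : IsLogConcaveLinear g α β) (j : ℕ) : 0 ≤ logIncrement g j :=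
  log_nonneg <| (one_le_div (hg.cast_pos j)).2 <| Nat.cast_le.2 <| hg.monotone j.le_succ

lemma logIncrement_antitone (hg : IsLogConcaveLinear g α β) : Antitone (logIncrement g) := by
  refine antitone_nat_of_succ_le fun j => ?_
  have hj := hg.cast_pos j
  have hj₁ := hg.cast_pos (j + 1)
  refine log_le_log (div_pos (hg.cast_pos _) hj₁) ((div_le_div_iff₀ hj₁ hj).2 ?_)
  have := hg.logConcave j
  rw [mul_comm, ← pow_two]
  exact_mod_cast this

lemma sum_Ico_logIncrement (hg : IsLogConcaveLinear g α β) {m n : ℕ} (hmn : m ≤ n) :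
    ∑ j ∈ Ico m n, logIncrement g j = log (g n) - log (g m) := by
  have hsub (j : ℕ) : logIncrement g j = log (g (j + 1)) - log (g j) :=
    log_div (hg.cast_pos _).ne' (hg.cast_pos _).ne'
  simp only [hsub]
  exact sum_Ico_sub (fun j => log (g j)) hmn

lemma sum_range_logIncrement (hg : IsLogConcaveLinear g α β) (n : ℕ) :
    ∑ j ∈ range n, logIncrement g j = log (g n) := by
  rw [range_eq_Ico, hg.sum_Ico_logIncrement n.zero_le, hg.map_zero, Nat.cast_one, log_one,
    sub_zero]

/-- Log-concavity makes `logIncrement g j` at most the mean of the increments over the upper half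
of `[0, j]`, and linear growth bounds the sum of the latter. -/
lemma logIncrement_le_div (hg : IsLogConcaveLinear g α β) {j : ℕ} (hj : 1 ≤ j) :
    logIncrement g j ≤ 2 * log (4 * β / α) / j := by
  obtain ⟨m, hm, hmj, hjm⟩ : ∃ m, 1 ≤ m ∧ 2 * m ≤ j + 1 ∧ j + 1 ≤ 4 * m :=
    ⟨(j + 1) / 2, by omega, by omega, by omega⟩
  have hα := hg.slope_pos
  have hmj' : (2 : ℝ) * m ≤ j + 1 := by exact_mod_cast hmj
  have hjm' : (j : ℝ) + 1 ≤ 4 * m := by exact_mod_cast hjm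
  have hmean : ((j : ℝ) + 1 - m) * logIncrement g j ≤ ∑ i ∈ Ico m (j + 1), logIncrement g i := by
    have := card_nsmul_le_sum (Ico m (j + 1)) (logIncrement g) (logIncrement g j)
      fun i hi => hg.logIncrement_antitone (Nat.lt_succ_iff.1 (mem_Ico.1 hi).2)
    rwa [Nat.card_Ico, nsmul_eq_mul, Nat.cast_sub (by omega), Nat.cast_add_one] at this
  have hratio : log (g (j + 1)) - log (g m) ≤ log (4 * β / α) := by
    rw [← log_div (hg.cast_pos _).ne' (hg.cast_pos _).ne']
    refine log_le_log (div_pos (hg.cast_pos _) (hg.cast_pos _)) ?_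
    rw [div_le_div_iff₀ (hg.cast_pos _) hα]
    have hupper := hg.upper (j + 1) (by omega)
    push_cast at hupper
    have hβ := hg.upper_slope_pos
    calc (g (j + 1) : ℝ) * α ≤ β * (4 * m) * α := by gcongr; exact hupper.trans (by gcongr)
      _ = 4 * β * (α * m) := by ring
      _ ≤ 4 * β * g m := by gcongr; exact hg.lower m
  rw [hg.sum_Ico_logIncrement (by omega)] at hmean
  rw [le_div_iff₀ (by positivity)]
  nlinarith [hg.logIncrement_nonneg j]

end IsLogConcaveLinear

lemma sum_range_sq_le_sum_range_sq_add {u : ℕ → ℝ} {B : ℝ} (hu : ∀ j : ℕ, 1 ≤ j → |u j| ≤ B / j)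
    {N : ℕ} (hN : 1 ≤ N) (n : ℕ) :
    ∑ j ∈ range n, u j ^ 2 ≤ ∑ j ∈ range N, u j ^ 2 + 2 * B ^ 2 / N := by
  have hcover : range n ⊆ range N ∪ Ioo (N - 1) n := fun j hj => by
    simp only [mem_range, mem_union, mem_Ioo] at hj ⊢
    omega
  have htail : ∑ j ∈ Ioo (N - 1) n, u j ^ 2 ≤ 2 * B ^ 2 / N := calc
    ∑ j ∈ Ioo (N - 1) n, u j ^ 2 ≤ ∑ j ∈ Ioo (N - 1) n, B ^ 2 * ((j : ℝ) ^ 2)⁻¹ := by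
      refine sum_le_sum fun j hj => ?_
      have hj₁ : 1 ≤ j := by have := (mem_Ioo.1 hj).1; omega
      rw [← sq_abs, ← div_eq_mul_inv, ← div_pow]
      exact pow_le_pow_left₀ (abs_nonneg _) (hu j hj₁) 2
    _ ≤ B ^ 2 * (2 / ((N - 1 : ℕ) + 1)) := by
      rw [← mul_sum]
      gcongr
      exact sum_Ioo_inv_sq_le _ _
    _ = 2 * B ^ 2 / N := by
      rw [← Nat.cast_add_one, Nat.sub_add_cancel hN]
      ring
  calc ∑ j ∈ range n, u j ^ 2 ≤ ∑ j ∈ range N ∪ Ioo (N - 1) n, u j ^ 2 :=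
        sum_le_sum_of_subset_of_nonneg hcover fun _ _ _ => sq_nonneg _
    _ ≤ ∑ j ∈ range N, u j ^ 2 + ∑ j ∈ Ioo (N - 1) n, u j ^ 2 := by
        rw [← sum_union_inter]
        exact le_add_of_nonneg_right (sum_nonneg fun _ _ => sq_nonneg _)
    _ ≤ ∑ j ∈ range N, u j ^ 2 + 2 * B ^ 2 / N := by gcongr

namespace IsLogConcaveLinear

variable {g : ℕ → ℕ} {α β : ℝ}

lemma abs_logIncrement_le_div (hg : IsLogConcaveLinear g α β) (j : ℕ) (hj : 1 ≤ j) :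
    |logIncrement g j| ≤ 2 * log (4 * β / α) / j :=
  (abs_of_nonneg (hg.logIncrement_nonneg j)).trans_le (hg.logIncrement_le_div hj)

lemma summable_logIncrement_sq (hg : IsLogConcaveLinear g α β) :
    Summable fun j => logIncrement g j ^ 2 :=
  summable_of_sum_range_le (fun _ => sq_nonneg _)
    (sum_range_sq_le_sum_range_sq_add hg.abs_logIncrement_le_div le_rfl)

lemma tsum_logIncrement_sq_le (hg : IsLogConcaveLinear g α β) {N : ℕ} (hN : 1 ≤ N) :
    ∑' j, logIncrement g j ^ 2 ≤
      ∑ j ∈ range N, logIncrement g j ^ 2 + 2 * (2 * log (4 * β / α)) ^ 2 / N :=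
  Real.tsum_le_of_sum_range_le (fun _ => sq_nonneg _)
    (sum_range_sq_le_sum_range_sq_add hg.abs_logIncrement_le_div hN)

lemma tsum_logIncrement_sq_pos (hg : IsLogConcaveLinear g α β) :
    0 < ∑' j, logIncrement g j ^ 2 := by
  obtain ⟨n, hn⟩ : ∃ n : ℕ, 1 < α * n := (Archimedean.arch 2 hg.slope_pos).imp fun n hn => by
    rw [nsmul_eq_mul, mul_comm] at hn
    linarith
  have hlog : 0 < ∑ j ∈ range n, logIncrement g j := by
    rw [hg.sum_range_logIncrement]
    exact log_pos (hn.trans_le (hg.lower n))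
  obtain ⟨j, -, hj⟩ := exists_lt_of_sum_lt (sum_const_zero.trans_lt hlog)
  exact hg.summable_logIncrement_sq.tsum_pos (fun _ => sq_nonneg _) j (pow_pos hj 2)

lemma eventually_log_le (hg : IsLogConcaveLinear g α β) :
    ∀ᶠ N : ℕ in atTop, log (g N) ≤ 2 * log N := by
  have hN : Tendsto (fun N : ℕ => (N : ℝ)) atTop atTop := tendsto_natCast_atTop_atTop
  filter_upwards [hN.eventually_ge_atTop β, eventually_ge_atTop 1] with N hβN hN₁
  have hN₀ : (0 : ℝ) < N := Nat.cast_pos.2 hN₁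
  calc log (g N) ≤ log ((N : ℝ) ^ 2) := by
        refine log_le_log (hg.cast_pos N) ((hg.upper N hN₁).trans ?_)
        nlinarith [hN₀]
    _ = 2 * log N := by rw [log_pow, Nat.cast_ofNat]

end IsLogConcaveLinear

end Growth

section Multiplicative

open Finset Real

/-- `f` is multiplicative, and on the powers of every member of the pairwise coprime sequence `q`
it depends on the exponent only, through `g`. The case `ν = 0` contains `f 1 = g 0`. -/
structure IsMultiplicativeAlong (f q g : ℕ → ℕ) : Prop where
  map_mul_of_coprime : ∀ m n : ℕ, m.Coprime n → f (m * n) = f m * f n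
  pairwise_coprime : Pairwise (Function.onFun Nat.Coprime q)
  map_pow : ∀ j ν, f (q j ^ ν) = g ν

namespace IsMultiplicativeAlong

variable {f q g d : ℕ → ℕ} {α β : ℝ}

lemma map_prod_pow (hf : IsMultiplicativeAlong f q g) (hg₀ : g 0 = 1) {ι : Type*} (s : Finset ι)
    {e : ι → ℕ} (he : Function.Injective e) (v : ι → ℕ) :
    f (∏ i ∈ s, q (e i) ^ v i) = ∏ i ∈ s, g (v i) := by
  classical
  induction s using Finset.induction_on with
  | empty => simpa only [prod_empty, pow_zero, hg₀] using hf.map_pow 0 0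
  | insert a s ha ih =>
    have hcoprime : (q (e a) ^ v a).Coprime (∏ i ∈ s, q (e i) ^ v i) :=
      Nat.Coprime.prod_right fun i hi => Nat.Coprime.pow _ _ <|
        hf.pairwise_coprime <| he.ne (ne_of_mem_of_not_mem hi ha).symm
    rw [prod_insert ha, prod_insert ha, hf.map_mul_of_coprime _ _ hcoprime, ih, hf.map_pow]

/-- The preimage of `∏ x ∈ P, q (c x)` gives each factor, with multiplicity, a base of its own:
the `i`-th factor `q (c x)` is the value of `f` at `q i ^ d (c x)`. -/
lemma exists_map_eq_prod (hf : IsMultiplicativeAlong f q g) (hg₀ : g 0 = 1)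
    (hd : ∀ j, g (d j) = q j) (hq : ∀ j, 0 < q j) {ι : Type*} (P : Finset ι) (c : ι → ℕ) {W : ℝ}
    (hW : ∀ i < #P, log (q i) ≤ W) :
    ∃ n, 1 ≤ n ∧ f n = ∏ x ∈ P, q (c x) ∧ log n ≤ W * ∑ x ∈ P, (d (c x) : ℝ) := by
  set exponent : Fin #P → ℕ := fun i => d (c (P.equivFin.symm i)) with hexponent
  refine ⟨∏ i : Fin #P, q i ^ exponent i, ?_, ?_, ?_⟩
  · exact prod_pos fun i _ => Nat.pow_pos (hq _)
  · rw [hf.map_prod_pow hg₀ _ Fin.val_injective]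
    simp only [hexponent, hd]
    rw [Equiv.prod_comp P.equivFin.symm fun x : P => q (c x), prod_coe_sort P fun x => q (c x)]
  · have hsum : ∑ i, (exponent i : ℝ) = ∑ x ∈ P, (d (c x) : ℝ) := by
      rw [← sum_coe_sort P fun x => (d (c x) : ℝ)]
      exact Equiv.sum_comp P.equivFin.symm fun x : P => (d (c x) : ℝ)
    push_cast
    rw [log_prod fun i _ => pow_ne_zero _ (Nat.cast_ne_zero.2 (hq _).ne'), ← hsum, mul_sum]
    refine sum_le_sum fun i _ => ?_
    rw [log_pow, mul_comm]
    gcongr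
    exact hW i i.isLt

lemma log_map_prod_range_prod_range (hf : IsMultiplicativeAlong f q g)
    (hg : IsLogConcaveLinear g α β) {J : ℕ → ℕ} (hJ : Antitone J) (N : ℕ) :
    log (f (∏ ν ∈ range N, ∏ j ∈ range (J ν), q j)) =
      ∑ ν ∈ range N, J ν * logIncrement g ν := by
  rw [prod_range_prod_range_comm_of_antitone hJ N fun _ j => q j]
  simp only [prod_const, card_range]
  rw [hf.map_prod_pow hg.map_zero _ (e := fun j => j) Function.injective_id]
  push_cast
  rw [log_prod fun j _ => (hg.cast_pos _).ne']
  simp only [← hg.sum_range_logIncrement]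
  rw [← sum_range_sum_range_comm_of_antitone hJ N fun ν _ => logIncrement g ν]
  simp only [sum_const, card_range, nsmul_eq_mul]

end IsMultiplicativeAlong

/-- The row lengths of the diagram of exponents: the inner argument is
`∏ ν < N, ∏ j < rowLength g N ν, q j`. Taking them proportional to the increments of `log g`
is optimal, by Cauchy–Schwarz. -/
noncomputable def rowLength (g : ℕ → ℕ) (N ν : ℕ) : ℕ :=
  ⌊N * logIncrement g ν⌋₊

namespace IsLogConcaveLinear

variable {g : ℕ → ℕ} {α β : ℝ}

lemma rowLength_antitone (hg : IsLogConcaveLinear g α β) (N : ℕ) : Antitone (rowLength g N) :=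
  fun _ _ h => Nat.floor_le_floor <|
    mul_le_mul_of_nonneg_left (hg.logIncrement_antitone h) N.cast_nonneg

lemma rowLength_le (hg : IsLogConcaveLinear g α β) (N ν : ℕ) :
    (rowLength g N ν : ℝ) ≤ N * logIncrement g ν :=
  Nat.floor_le (mul_nonneg N.cast_nonneg (hg.logIncrement_nonneg ν))

lemma sum_rowLength_le (hg : IsLogConcaveLinear g α β) (N : ℕ) :
    ∑ ν ∈ range N, (rowLength g N ν : ℝ) ≤ N * log (g N) := by
  rw [← hg.sum_range_logIncrement, mul_sum]
  exact sum_le_sum fun ν _ => hg.rowLength_le N ν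

lemma sum_sum_range_rowLength_le (hg : IsLogConcaveLinear g α β) (N : ℕ) :
    ∑ ν ∈ range N, ∑ j ∈ range (rowLength g N ν), ((j : ℝ) + 1) ≤
      (N ^ 2 * ∑' j, logIncrement g j ^ 2 + N * log (g N)) / 2 := by
  have hgauss (k : ℕ) : ∑ j ∈ range k, ((j : ℝ) + 1) = k * (k + 1) / 2 := by
    induction k with
    | zero => simp
    | succ k ih => rw [sum_range_succ, ih]; push_cast; ring
  have hrow (ν : ℕ) : ∑ j ∈ range (rowLength g N ν), ((j : ℝ) + 1) ≤
      (N ^ 2 * logIncrement g ν ^ 2 + N * logIncrement g ν) / 2 := by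
    have hle := hg.rowLength_le N ν
    have hnonneg : (0 : ℝ) ≤ rowLength g N ν := Nat.cast_nonneg _
    rw [hgauss]
    nlinarith [hnonneg]
  calc ∑ ν ∈ range N, ∑ j ∈ range (rowLength g N ν), ((j : ℝ) + 1)
      ≤ ∑ ν ∈ range N, (N ^ 2 * logIncrement g ν ^ 2 + N * logIncrement g ν) / 2 :=
        sum_le_sum fun ν _ => hrow ν
    _ = (N ^ 2 * ∑ ν ∈ range N, logIncrement g ν ^ 2 + N * log (g N)) / 2 := by
        rw [← sum_div, sum_add_distrib, ← mul_sum, ← mul_sum, hg.sum_range_logIncrement]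
    _ ≤ (N ^ 2 * ∑' j, logIncrement g j ^ 2 + N * log (g N)) / 2 := by
        gcongr
        exact hg.summable_logIncrement_sq.sum_le_tsum _ fun _ _ => sq_nonneg _

lemma le_sum_rowLength_mul (hg : IsLogConcaveLinear g α β) {N : ℕ} (hN : 1 ≤ N) :
    N * ∑' j, logIncrement g j ^ 2 - 2 * (2 * log (4 * β / α)) ^ 2 - log (g N) ≤
      ∑ ν ∈ range N, rowLength g N ν * logIncrement g ν := by
  have hN₀ : (0 : ℝ) < N := Nat.cast_pos.2 hN
  have htail : N * ∑' j, logIncrement g j ^ 2 ≤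
      N * ∑ j ∈ range N, logIncrement g j ^ 2 + 2 * (2 * log (4 * β / α)) ^ 2 := by
    refine (mul_le_mul_of_nonneg_left (hg.tsum_logIncrement_sq_le hN) hN₀.le).trans_eq ?_
    field_simp
  calc N * ∑' j, logIncrement g j ^ 2 - 2 * (2 * log (4 * β / α)) ^ 2 - log (g N)
      ≤ N * ∑ j ∈ range N, logIncrement g j ^ 2 - log (g N) := by linarith
    _ = ∑ ν ∈ range N, (N * logIncrement g ν - 1) * logIncrement g ν := by
        rw [← hg.sum_range_logIncrement, mul_sum, ← sum_sub_distrib]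
        exact sum_congr rfl fun ν _ => by ring
    _ ≤ ∑ ν ∈ range N, rowLength g N ν * logIncrement g ν := by
        refine sum_le_sum fun ν _ => ?_
        gcongr
        · exact hg.logIncrement_nonneg ν
        · exact (Nat.sub_one_lt_floor _).le

end IsLogConcaveLinear

/-- The diagram of exponents, as the set of its cells `⟨ν, j⟩` with row index `ν < N`. -/
noncomputable def exponentDiagram (g : ℕ → ℕ) (N : ℕ) : Finset (Σ _ : ℕ, ℕ) :=
  (range N).sigma fun ν => range (rowLength g N ν)

lemma card_exponentDiagram (g : ℕ → ℕ) (N : ℕ) :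
    #(exponentDiagram g N) = ∑ ν ∈ range N, rowLength g N ν := by
  simp only [exponentDiagram, card_sigma, card_range]

lemma snd_lt_card_of_mem_exponentDiagram {g : ℕ → ℕ} {N : ℕ} {x : Σ _ : ℕ, ℕ}
    (hx : x ∈ exponentDiagram g N) : x.2 < #(exponentDiagram g N) := by
  obtain ⟨hν, hj⟩ := mem_sigma.1 hx
  rw [card_exponentDiagram]
  exact (mem_range.1 hj).trans_le
    (single_le_sum (f := rowLength g N) (fun _ _ => Nat.zero_le _) hν)

lemma IsLogConcaveLinear.mul_sum_exponentDiagram_le {g d : ℕ → ℕ} {α β κ W : ℝ}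
    (hg : IsLogConcaveLinear g α β) (hκ : 0 ≤ κ) (hW : 0 ≤ W) {N : ℕ}
    (hd : ∀ x ∈ exponentDiagram g N, (g (d x.2) : ℝ) ≤ κ * (x.2 + 1) * W) :
    W * ∑ x ∈ exponentDiagram g N, (d x.2 : ℝ) ≤
      κ / (2 * α) * (W ^ 2 * (N ^ 2 * ∑' j, logIncrement g j ^ 2 + N * log (g N))) := by
  have hα := hg.slope_pos
  have hcell : ∀ x ∈ exponentDiagram g N, (d x.2 : ℝ) ≤ κ / α * W * (x.2 + 1) := fun x hx => by
    have hle := (hg.lower (d x.2)).trans (hd x hx)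
    exact ((le_div_iff₀' hα).2 hle).trans_eq (by ring)
  calc W * ∑ x ∈ exponentDiagram g N, (d x.2 : ℝ)
      ≤ W * ∑ x ∈ exponentDiagram g N, κ / α * W * ((x.2 : ℝ) + 1) := by
        gcongr with x hx
        exact hcell x hx
    _ = κ / α * W ^ 2 * ∑ ν ∈ range N, ∑ j ∈ range (rowLength g N ν), ((j : ℝ) + 1) := by
        rw [← mul_sum, exponentDiagram, sum_sigma]
        ring
    _ ≤ κ / α * W ^ 2 * ((N ^ 2 * ∑' j, logIncrement g j ^ 2 + N * log (g N)) / 2) := by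
        gcongr
        exact hg.sum_sum_range_rowLength_le N
    _ = κ / (2 * α) * (W ^ 2 * (N ^ 2 * ∑' j, logIncrement g j ^ 2 + N * log (g N))) := by ring

lemma IsMultiplicativeAlong.exists_le_log_map_map {f q g : ℕ → ℕ} {α β κ W : ℝ}
    (hf : IsMultiplicativeAlong f q g) (hg : IsLogConcaveLinear g α β)
    (hqg : ∀ j, q j ∈ Set.range g) (hκ : 0 ≤ κ) (hW : 0 ≤ W) {N : ℕ} (hN : 1 ≤ N)
    (hq : ∀ j : ℕ, (j : ℝ) + 1 ≤ N * log (g N) → q j ≤ κ * (j + 1) * W ∧ log (q j) ≤ W) :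
    ∃ n : ℕ, 1 ≤ n ∧
      log n ≤ κ / (2 * α) * (W ^ 2 * (N ^ 2 * ∑' j, logIncrement g j ^ 2 + N * log (g N))) ∧
      N * ∑' j, logIncrement g j ^ 2 - 2 * (2 * log (4 * β / α)) ^ 2 - log (g N) ≤
        log (f (f n)) := by
  choose d hd using hqg
  have hqpos (j : ℕ) : 0 < q j := hd j ▸ hg.pos (d j)
  have hcard : (#(exponentDiagram g N) : ℝ) ≤ N * log (g N) := by
    simpa only [card_exponentDiagram, Nat.cast_sum] using hg.sum_rowLength_le N
  have hq' (j : ℕ) (hj : j < #(exponentDiagram g N)) :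
      q j ≤ κ * (j + 1) * W ∧ log (q j) ≤ W :=
    hq j (le_trans (by exact_mod_cast hj) hcard)
  obtain ⟨n, hn, hfn, hlog⟩ := hf.exists_map_eq_prod hg.map_zero hd hqpos
    (exponentDiagram g N) Sigma.snd fun i hi => (hq' i hi).2
  refine ⟨n, hn, hlog.trans (hg.mul_sum_exponentDiagram_le hκ hW fun x hx => ?_), ?_⟩
  · rw [hd]
    exact (hq' x.2 (snd_lt_card_of_mem_exponentDiagram hx)).1
  · rw [hfn, exponentDiagram, prod_sigma,
      hf.log_map_prod_range_prod_range hg (hg.rowLength_antitone N)]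
    exact hg.le_sum_rowLength_mul hN

end Multiplicative

section Asymptotics

open Real Asymptotics

lemma tendsto_log_log_atTop : Tendsto (fun x : ℝ => log (log x)) atTop atTop :=
  tendsto_log_atTop.comp tendsto_log_atTop

lemma eventually_log_log_le_mul_log {c : ℝ} (hc : 0 < c) :
    ∀ᶠ x : ℝ in atTop, log (log x) ≤ c * log x := by
  filter_upwards [tendsto_log_atTop.eventually (isLittleO_log_id_atTop.bound hc),
    tendsto_log_atTop.eventually_ge_atTop 0] with x hx hlog
  simpa only [id, norm_eq_abs, abs_of_nonneg hlog] using (le_abs_self _).trans hx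

/-- The approximation `log x + k * log (log x)` to logarithms of numbers of size
`x * (log x) ^ k`. -/
noncomputable def logWeight (k x : ℝ) : ℝ :=
  log x + k * log (log x)

lemma logWeight_le_logWeight {k x y : ℝ} (hk : 0 ≤ k) (hx : 1 < x) (hxy : x ≤ y) :
    logWeight k x ≤ logWeight k y := by
  have hlog : log x ≤ log y := log_le_log (by linarith) hxy
  exact add_le_add hlog (mul_le_mul_of_nonneg_left (log_le_log (log_pos hx) hlog) hk)

lemma tendsto_logWeight_atTop {k : ℝ} (hk : 0 ≤ k) : Tendsto (logWeight k) atTop atTop :=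
  tendsto_atTop_mono' atTop ((tendsto_log_log_atTop.eventually_ge_atTop 0).mono fun _ hx =>
    le_add_of_nonneg_right (mul_nonneg hk hx)) tendsto_log_atTop

lemma logWeight_isLittleO_id (k : ℝ) : logWeight k =o[atTop] (id : ℝ → ℝ) :=
  isLittleO_log_id_atTop.add <|
    ((isLittleO_log_id_atTop.comp_tendsto tendsto_log_atTop).const_mul_left k).trans
      isLittleO_log_id_atTop

lemma tendsto_div_logWeight_atTop {k : ℝ} (hk : 0 ≤ k) :
    Tendsto (fun x => x / logWeight k x) atTop atTop := by
  have hzero : Tendsto (fun x => logWeight k x / x) atTop (nhdsWithin 0 (Set.Ioi 0)) := by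
    refine tendsto_nhdsWithin_iff.2 ⟨(logWeight_isLittleO_id k).tendsto_div_nhds_zero, ?_⟩
    filter_upwards [(tendsto_logWeight_atTop hk).eventually_gt_atTop 0, eventually_gt_atTop 0]
      with x hW hx
    exact div_pos hW hx
  simpa only [Function.comp_def, inv_div] using tendsto_inv_nhdsGT_zero.comp hzero

section Sequence

lemma log_mul_mul_log {C x : ℝ} (hC : 0 < C) (hx : 1 < x) :
    log (C * x * log x) = log C + logWeight 1 x := by
  have := log_pos hx
  rw [log_mul (by positivity) (by positivity), log_mul (by positivity) (by positivity), logWeight]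
  ring

lemma eventually_log_add_log_log_le_logWeight {C : ℝ} (hC : 0 < C) (A : ℝ) :
    ∀ᶠ x : ℝ in atTop,
      log (C * x * log x) + log (log (C * x * log x)) + A ≤ logWeight 3 x := by
  filter_upwards [tendsto_log_atTop.eventually_ge_atTop (2 * log C),
    eventually_log_log_le_mul_log (show (0 : ℝ) < 1 / 2 by norm_num),
    tendsto_log_log_atTop.eventually_ge_atTop (log C + log 2 + A),
    (tendsto_logWeight_atTop zero_le_one).eventually_gt_atTop (-log C),
    tendsto_log_atTop.eventually_gt_atTop 0, eventually_gt_atTop 1]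
    with x hlogC hsmall hconst hpos hlog hx
  have hloglog : log (log (C * x * log x)) ≤ log 2 + log (log x) := by
    rw [← log_mul two_ne_zero hlog.ne']
    refine log_le_log ?_ ?_ <;> rw [log_mul_mul_log hC hx]
    · linarith
    · rw [logWeight]
      linarith
  rw [log_mul_mul_log hC hx] at hloglog ⊢
  simp only [logWeight] at hloglog ⊢
  linarith

lemma eventually_log_mul_logWeight_le_logWeight {C : ℝ} (hC : 0 < C) :
    ∀ᶠ x : ℝ in atTop, log (C * x * log x * logWeight 3 x) ≤ logWeight 3 x := by
  filter_upwards [eventually_log_log_le_mul_log (show (0 : ℝ) < 1 / 3 by norm_num),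
    tendsto_log_log_atTop.eventually_ge_atTop (log C + log 2),
    (tendsto_logWeight_atTop zero_le_three).eventually_gt_atTop 0,
    tendsto_log_atTop.eventually_gt_atTop 0, eventually_gt_atTop 1]
    with x hsmall hconst hW hlog hx
  have hlogW : log (logWeight 3 x) ≤ log 2 + log (log x) := by
    rw [← log_mul two_ne_zero hlog.ne']
    refine log_le_log hW ?_
    rw [logWeight]
    linarith
  rw [log_mul (by positivity) hW.ne', log_mul_mul_log hC hx]
  simp only [logWeight] at hlogW ⊢
  linarith

variable {q : ℕ → ℝ} {κ A : ℝ}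

lemma exists_forall_le_mul_log_add (hκ : 0 < κ)
    (hq : ∀ j : ℕ, 1 ≤ j → q j ≤ κ * (j + 1 : ℕ) *
      (log (j + 1 : ℕ) + log (log (j + 1 : ℕ)) + A)) :
    ∃ A' : ℝ, ∀ y : ℝ, exp 1 ≤ y → ∀ j : ℕ, (j : ℝ) + 1 ≤ y →
      q j ≤ κ * (j + 1) * (log y + log (log y) + A') := by
  refine ⟨max A (q 0 / κ), fun y hy j hjy => ?_⟩
  have hlogy : 1 ≤ log y := (le_log_iff_exp_le ((exp_pos 1).trans_le hy)).2 hy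
  rcases Nat.eq_zero_or_pos j with rfl | hj
  · have hq₀ : q 0 ≤ κ * max A (q 0 / κ) := by
      rw [← div_le_iff₀' hκ]
      exact le_max_right _ _
    have := log_nonneg hlogy
    rw [Nat.cast_zero, zero_add, mul_one]
    exact hq₀.trans (by gcongr; linarith)
  · have hj₁ : (1 : ℝ) < j + 1 := by simpa using hj
    have hlogj : log ((j : ℝ) + 1) ≤ log y := log_le_log (by positivity) hjy
    have := log_le_log (log_pos hj₁) hlogj
    have hqj := hq j hj
    push_cast at hqj
    exact hqj.trans (by gcongr; exact le_max_left _ _)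

lemma eventually_forall_le_logWeight (hκ : 0 < κ) (hpos : ∀ j, 0 < q j)
    (hq : ∀ j : ℕ, 1 ≤ j → q j ≤ κ * (j + 1 : ℕ) *
      (log (j + 1 : ℕ) + log (log (j + 1 : ℕ)) + A)) {C : ℝ} (hC : 0 < C) :
    ∀ᶠ x : ℝ in atTop, ∀ j : ℕ, (j : ℝ) + 1 ≤ C * x * log x →
      q j ≤ κ * (j + 1) * logWeight 3 x ∧ log (q j) ≤ logWeight 3 x := by
  obtain ⟨A', hA'⟩ := exists_forall_le_mul_log_add hκ hq
  have hlarge : Tendsto (fun x => C * x * log x) atTop atTop :=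
    (tendsto_id.const_mul_atTop hC).atTop_mul_atTop₀ tendsto_log_atTop
  filter_upwards [eventually_log_add_log_log_le_logWeight hC A',
    eventually_log_mul_logWeight_le_logWeight (mul_pos hκ hC),
    hlarge.eventually_ge_atTop (exp 1),
    (tendsto_logWeight_atTop zero_le_three).eventually_gt_atTop 0] with x hsum hprod hx hW j hj
  have hqj : q j ≤ κ * (j + 1) * logWeight 3 x := (hA' _ hx j hj).trans (by gcongr)
  refine ⟨hqj, (log_le_log (hpos j) ?_).trans hprod⟩
  calc q j ≤ κ * (C * x * log x) * logWeight 3 x := hqj.trans (by gcongr)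
    _ = κ * C * x * log x * logWeight 3 x := by ring

/-- Passing from `logWeight 3` to `logWeight 4` absorbs the lower-order term `2 * x * log x`. -/
lemma eventually_logWeight_sq_mul_le {S : ℝ} (hS : 0 < S) :
    ∀ᶠ x : ℝ in atTop, logWeight 3 x ^ 2 * (x ^ 2 * S + x * (2 * log x)) ≤
      S * (x * logWeight 4 x) ^ 2 := by
  have hsq := (isLittleO_pow_log_id_atTop (n := 2)).bound (show 0 < S / 2 by positivity)
  filter_upwards [hsq, eventually_log_log_le_mul_log (show (0 : ℝ) < 1 / 3 by norm_num),
    tendsto_log_log_atTop.eventually_ge_atTop 1, tendsto_log_atTop.eventually_gt_atTop 0,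
    eventually_gt_atTop 0] with x hsq hml hm hlog hx
  rw [norm_pow, id, norm_eq_abs, norm_eq_abs, sq_abs, abs_of_pos hx] at hsq
  have hgap : logWeight 3 x * log x ≤ S * x * log (log x) := by
    rw [logWeight]
    nlinarith [mul_pos hS hx]
  have hW : 0 ≤ logWeight 3 x := by rw [logWeight]; positivity
  have hexpand : S * (x * logWeight 4 x) ^ 2 -
      logWeight 3 x ^ 2 * (x ^ 2 * S + x * (2 * log x)) =
        2 * x * logWeight 3 x * (S * x * log (log x) - logWeight 3 x * log x) +
          S * x ^ 2 * log (log x) ^ 2 := by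
    simp only [logWeight]
    ring
  rw [← sub_nonneg, hexpand]
  have := sub_nonneg.2 hgap
  positivity

end Sequence

section Inversion

lemma eventually_floor_mul_logWeight_le {k : ℝ} (hk : 0 ≤ k) :
    ∀ᶠ y : ℝ in atTop,
      ⌊y / logWeight k y⌋₊ * logWeight k ⌊y / logWeight k y⌋₊ ≤ y := by
  filter_upwards [(tendsto_logWeight_atTop hk).eventually_ge_atTop 1,
    (tendsto_nat_floor_atTop.comp (tendsto_div_logWeight_atTop hk)).eventually_gt_atTop 1,
    eventually_gt_atTop 0] with y hW hN hy
  have hle : (⌊y / logWeight k y⌋₊ : ℝ) ≤ y / logWeight k y := Nat.floor_le (by positivity)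
  have hN' : (1 : ℝ) < ⌊y / logWeight k y⌋₊ := Nat.one_lt_cast.2 hN
  calc ⌊y / logWeight k y⌋₊ * logWeight k ⌊y / logWeight k y⌋₊
      ≤ ⌊y / logWeight k y⌋₊ * logWeight k y := by
        gcongr
        exact logWeight_le_logWeight hk hN' (hle.trans (div_le_self hy.le hW))
    _ ≤ y / logWeight k y * logWeight k y := by gcongr
    _ = y := div_mul_cancel₀ y (by positivity)

variable {b : ℝ}

lemma tendsto_sqrt_div_atTop (hb : 0 < b) : Tendsto (fun L => √L / b) atTop atTop :=
  tendsto_sqrt_atTop.atTop_div_const hb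

lemma eventually_sq_mul_floor_mul_logWeight_sq_le {k : ℝ} (hk : 0 ≤ k) (hb : 0 < b) :
    ∀ᶠ L : ℝ in atTop, b ^ 2 * (⌊√L / b / logWeight k (√L / b)⌋₊ *
      logWeight k ⌊√L / b / logWeight k (√L / b)⌋₊) ^ 2 ≤ L := by
  have hN : Tendsto (fun L => ⌊√L / b / logWeight k (√L / b)⌋₊) atTop atTop :=
    tendsto_nat_floor_atTop.comp
      ((tendsto_div_logWeight_atTop hk).comp (tendsto_sqrt_div_atTop hb))
  have hW := (tendsto_logWeight_atTop hk).comp (tendsto_natCast_atTop_atTop.comp hN)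
  filter_upwards [(tendsto_sqrt_div_atTop hb).eventually (eventually_floor_mul_logWeight_le hk),
    hW.eventually_ge_atTop 0, eventually_ge_atTop 0] with L hle hW hL
  calc _ ≤ b ^ 2 * (√L / b) ^ 2 :=
        mul_le_mul_of_nonneg_left (pow_le_pow_left₀ (mul_nonneg (Nat.cast_nonneg _) hW) hle 2)
          (sq_nonneg b)
    _ = L := by rw [← mul_pow, mul_div_cancel₀ _ hb.ne', sq_sqrt hL]

lemma eventually_sqrt_div_le (b : ℝ) : ∀ᶠ L : ℝ in atTop, √L / b ≤ L := by
  filter_upwards [tendsto_sqrt_atTop.eventually_ge_atTop (1 / b), eventually_ge_atTop 0]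
    with L hL hL₀
  calc √L / b = √L * (1 / b) := div_eq_mul_one_div _ _
    _ ≤ √L * √L := by gcongr
    _ = L := mul_self_sqrt hL₀

lemma eventually_logWeight_sqrt_div_le (hb : 0 < b) :
    ∀ᶠ L : ℝ in atTop, logWeight 4 (√L / b) ≤ logWeight 10 L / 2 := by
  filter_upwards [eventually_sqrt_div_le b, (tendsto_sqrt_div_atTop hb).eventually_gt_atTop 1,
    tendsto_log_log_atTop.eventually_ge_atTop (-log b), eventually_gt_atTop 0] with L hle hgt hm hL
  have hlog : log (√L / b) = log L / 2 - log b := by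
    rw [log_div (sqrt_pos.2 hL).ne' hb.ne', log_sqrt hL.le]
  have hloglog : log (log (√L / b)) ≤ log (log L) :=
    log_le_log (log_pos hgt) (log_le_log (by linarith) hle)
  simp only [logWeight]
  linarith

lemma eventually_le_sqrt_div_div_logWeight (hb : 0 < b) :
    ∀ᶠ L : ℝ in atTop, √L / log L * (2 / b - 20 / b * (log (log L) / log L)) ≤
      √L / b / logWeight 4 (√L / b) := by
  filter_upwards [eventually_logWeight_sqrt_div_le hb,
    ((tendsto_logWeight_atTop zero_le_four).comp (tendsto_sqrt_div_atTop hb)).eventually_gt_atTop 0,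
    tendsto_log_atTop.eventually_gt_atTop 0, tendsto_log_log_atTop.eventually_gt_atTop 0]
    with L hle hpos hl hm
  have hinv : 1 - 10 * (log (log L) / log L) ≤ log L / logWeight 10 L := by
    rw [logWeight, le_div_iff₀ (by positivity)]
    have : (1 - 10 * (log (log L) / log L)) * (log L + 10 * log (log L)) =
        log L - 100 * log (log L) ^ 2 / log L := by field_simp; ring
    rw [this, sub_le_self_iff]
    positivity
  calc √L / log L * (2 / b - 20 / b * (log (log L) / log L))
      = 2 * √L / (b * log L) * (1 - 10 * (log (log L) / log L)) := by field_simp; ring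
    _ ≤ 2 * √L / (b * log L) * (log L / logWeight 10 L) := by gcongr
    _ = √L / b / (logWeight 10 L / 2) := by field_simp
    _ ≤ √L / b / logWeight 4 (√L / b) := by gcongr

lemma eventually_add_mul_log_le_sqrt_div (S c : ℝ) :
    ∀ᶠ L : ℝ in atTop, S + c * log L ≤ √L / log L * (log (log L) / log L) := by
  have hlittleO : (fun L => log L ^ 3) =o[atTop] fun L => √L := by
    simpa only [sqrt_eq_rpow, ← rpow_natCast] using
      isLittleO_log_rpow_rpow_atTop (3 : ℕ) (show (0 : ℝ) < 1 / 2 by norm_num)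
  have hC : 0 < 1 / (|S| + |c| + 1) := by positivity
  filter_upwards [hlittleO.bound hC, tendsto_log_atTop.eventually_ge_atTop 1,
    tendsto_log_log_atTop.eventually_ge_atTop 1] with L hL hl hm
  rw [norm_of_nonneg (by positivity), norm_of_nonneg (by positivity), div_mul_eq_mul_div,
    le_div_iff₀ (by positivity), one_mul] at hL
  have hlinear : S + c * log L ≤ (|S| + |c| + 1) * log L := by
    nlinarith [le_abs_self S, le_abs_self c, abs_nonneg S]
  calc S + c * log L ≤ (|S| + |c| + 1) * log L := hlinear
    _ = log L ^ 3 * (|S| + |c| + 1) / log L ^ 2 := by field_simp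
    _ ≤ √L * log (log L) / log L ^ 2 :=
        div_le_div_of_nonneg_right (hL.trans (le_mul_of_one_le_right (sqrt_nonneg L) hm))
          (sq_nonneg _)
    _ = √L / log L * (log (log L) / log L) := by ring

lemma eventually_le_floor_mul_sub_log {S : ℝ} (hS : 0 ≤ S) (hb : 0 < b) :
    ∀ᶠ L : ℝ in atTop,
      √L / log L * (2 * S / b - (20 * S / b + 1) * (log (log L) / log L)) ≤
        ⌊√L / b / logWeight 4 (√L / b)⌋₊ * S -
          3 * log ⌊√L / b / logWeight 4 (√L / b)⌋₊ := by
  filter_upwards [eventually_le_sqrt_div_div_logWeight hb, eventually_add_mul_log_le_sqrt_div S 3,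
    eventually_sqrt_div_le b,
    ((tendsto_logWeight_atTop zero_le_four).comp (tendsto_sqrt_div_atTop hb)).eventually_ge_atTop 1,
    (tendsto_sqrt_div_atTop hb).eventually_gt_atTop 0, eventually_ge_atTop 1]
    with L hmain herror hle hW hy hL
  set N := ⌊√L / b / logWeight 4 (√L / b)⌋₊
  have hNlt : √L / b / logWeight 4 (√L / b) ≤ N + 1 := (Nat.lt_floor_add_one _).le
  have hNle : (N : ℝ) ≤ L :=
    (Nat.floor_le (div_nonneg hy.le (zero_le_one.trans hW))).trans
      ((div_le_self hy.le hW).trans hle)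
  have hlogN : log N ≤ log L := by
    rcases Nat.eq_zero_or_pos N with h | h
    · rw [h, Nat.cast_zero, log_zero]
      exact log_nonneg hL
    · exact log_le_log (Nat.cast_pos.2 h) hNle
  calc √L / log L * (2 * S / b - (20 * S / b + 1) * (log (log L) / log L))
      = √L / log L * (2 / b - 20 / b * (log (log L) / log L)) * S -
          √L / log L * (log (log L) / log L) := by ring
    _ ≤ (N + 1) * S - (S + 3 * log L) :=
        sub_le_sub (mul_le_mul_of_nonneg_right (hmain.trans hNlt) hS) herror
    _ ≤ N * S - 3 * log N := by linarith

end Inversion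

end Asymptotics


section MaximalOrder

open Real

lemma le_biSup_finset {ι : Type*} {s : Finset ι} (u : ι → ℝ) {i : ι} (hi : i ∈ s) :
    u i ≤ ⨆ j ∈ s, u j := by
  refine le_ciSup₂ (f := fun j (_ : j ∈ s) => u j) ((s.finite_toSet.image u).bddAbove.mono ?_) i hi
  rintro _ ⟨_, ⟨j, rfl⟩, hj, rfl⟩
  exact ⟨j, hj, rfl⟩

lemma IsMultiplicativeAlong.eventually_exists_le_log_map_map {f q g : ℕ → ℕ} {κ A α β : ℝ}
    (hf : IsMultiplicativeAlong f q g) (hg : IsLogConcaveLinear g α β)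
    (hqg : ∀ j, q j ∈ Set.range g) (hκ : 0 < κ)
    (hq : ∀ j : ℕ, 1 ≤ j → (q j : ℝ) ≤ κ * (j + 1 : ℕ) *
      (log (j + 1 : ℕ) + log (log (j + 1 : ℕ)) + A)) :
    ∀ᶠ N : ℕ in atTop, ∃ n : ℕ, 1 ≤ n ∧
      log n ≤ κ / (2 * α) * ((∑' j, logIncrement g j ^ 2) * (N * logWeight 4 N) ^ 2) ∧
      N * ∑' j, logIncrement g j ^ 2 - 3 * log N ≤ log (f (f n)) := by
  have hN : Tendsto (fun N : ℕ => (N : ℝ)) atTop atTop := tendsto_natCast_atTop_atTop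
  have hα := hg.slope_pos
  have hqpos (j : ℕ) : (0 : ℝ) < q j := by
    obtain ⟨ν, hν⟩ := hqg j
    exact hν ▸ hg.cast_pos ν
  filter_upwards [hg.eventually_log_le, eventually_ge_atTop 1,
    hN.eventually (eventually_forall_le_logWeight hκ hqpos hq two_pos),
    hN.eventually (eventually_logWeight_sq_mul_le hg.tsum_logIncrement_sq_pos),
    hN.eventually ((tendsto_logWeight_atTop zero_le_three).eventually_ge_atTop 0),
    hN.eventually (tendsto_log_atTop.eventually_ge_atTop (2 * (2 * log (4 * β / α)) ^ 2))]
    with N hlogg hN₁ hqN hweight hW hconst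
  have hrange : N * log (g N) ≤ 2 * N * log N :=
    (mul_le_mul_of_nonneg_left hlogg N.cast_nonneg).trans_eq (by ring)
  obtain ⟨n, hn, hlogn, hle⟩ := hf.exists_le_log_map_map hg hqg hκ.le hW hN₁
    fun j hj => hqN j (hj.trans hrange)
  refine ⟨n, hn, hlogn.trans ?_, le_trans (by linarith) hle⟩
  exact mul_le_mul_of_nonneg_left (le_trans (by gcongr) hweight) (by positivity)

lemma sqrt_eight_mul_div_sqrt_div {S κ α : ℝ} (hS : 0 < S) (hκ : 0 < κ) (hα : 0 < α) :
    √(8 * S) / √(κ / α) = 2 * S / √(κ / (2 * α) * S) := by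
  rw [← sqrt_div (by positivity), sqrt_eq_iff_eq_sq (by positivity) (by positivity), div_pow,
    sq_sqrt (by positivity)]
  field_simp
  norm_num

theorem maxOrder_lower_bound_general {f q g : ℕ → ℕ} {κ A α β : ℝ} (hκ : 0 < κ)
    (hg : IsLogConcaveLinear g α β) (hf : IsMultiplicativeAlong f q g)
    (hqg : ∀ j, q j ∈ Set.range g)
    (hq : ∀ j : ℕ, 1 ≤ j → (q j : ℝ) ≤ κ * (j + 1 : ℕ) *
      (log (j + 1 : ℕ) + log (log (j + 1 : ℕ)) + A)) :
    ∃ C : ℝ, 0 < C ∧ ∀ᶠ x : ℕ in atTop,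
      √(log x) / log (log x) *
          (√(8 * ∑' j, logIncrement g j ^ 2) / √(κ / α) -
            C * (log (log (log x)) / log (log x))) ≤
        ⨆ n ∈ Finset.Icc 1 x, log (f (f n)) := by
  have hα := hg.slope_pos
  have hS := hg.tsum_logIncrement_sq_pos
  set S := ∑' j, logIncrement g j ^ 2
  set b := √(κ / (2 * α) * S)
  have hb : 0 < b := sqrt_pos.2 (by positivity)
  have hL : Tendsto (fun x : ℕ => log x) atTop atTop :=
    tendsto_log_atTop.comp tendsto_natCast_atTop_atTop
  have hN := tendsto_nat_floor_atTop.comp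
    ((tendsto_div_logWeight_atTop zero_le_four).comp ((tendsto_sqrt_div_atTop hb).comp hL))
  refine ⟨20 * S / b + 1, by positivity, ?_⟩
  filter_upwards [hN.eventually (hf.eventually_exists_le_log_map_map hg hqg hκ hq),
    hL.eventually (eventually_le_floor_mul_sub_log hS.le hb),
    hL.eventually (eventually_sq_mul_floor_mul_logWeight_sq_le zero_le_four hb),
    eventually_ge_atTop 1] with x ⟨n, hn, hlogn, hle⟩ hbound hfloor hx
  have hnx : n ≤ x := by
    rw [← Nat.cast_le (α := ℝ), ← log_le_log_iff (Nat.cast_pos.2 hn) (Nat.cast_pos.2 hx)]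
    refine hlogn.trans (le_of_eq_of_le ?_ hfloor)
    rw [sq_sqrt (by positivity), mul_assoc]
    rfl
  rw [sqrt_eight_mul_div_sqrt_div hS hκ hα]
  exact (hbound.trans hle).trans
    (le_biSup_finset (fun n => log (f (f n))) (Finset.mem_Icc.2 ⟨hn, hnx⟩))

end MaximalOrder

section Affine

variable {f q g : ℕ → ℕ}

lemma isLogConcaveLinear_of_affine {α : ℕ} {β : ℝ} (hα : 1 ≤ α) (hg : ∀ ν, g ν = α * ν + 1)
    (hupper : ∀ ν : ℕ, 1 ≤ ν → (g ν : ℝ) ≤ β * ν) : IsLogConcaveLinear g α β where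
  map_zero := by rw [hg, mul_zero, zero_add]
  monotone := fun μ ν h => by rw [hg, hg]; gcongr
  logConcave ν := by simp only [hg]; nlinarith
  slope_pos := Nat.cast_pos.2 hα
  lower ν := by rw [hg]; push_cast; linarith
  upper := hupper

lemma isMultiplicativeAlong_of_prime (hprime : ∀ j, (q j).Prime) (hq : Function.Injective q)
    (hg₀ : g 0 = 1) (hf₁ : f 1 = 1) (hmul : ∀ m n : ℕ, m.Coprime n → f (m * n) = f m * f n)
    (hpow : ∀ j ν, 1 ≤ ν → f (q j ^ ν) = g ν) : IsMultiplicativeAlong f q g where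
  map_mul_of_coprime := hmul
  pairwise_coprime i j hij := (Nat.coprime_primes (hprime i) (hprime j)).2 (hq.ne hij)
  map_pow j ν := by
    rcases Nat.eq_zero_or_pos ν with rfl | hν
    · rw [pow_zero, hf₁, hg₀]
    · exact hpow j ν hν

end Affine



/-- **Lower bound for the maximal order of the iterated function `f`.**
Under the standing hypotheses, with `g(ν) = α·ν + 1` for some `α ∈ ℕ`, one has
`M(x) ≥ (√(log x)/log₂ x)·(C_g/√(κ/α) + O(log₃ x/log₂ x))` as `x → ∞`, where
`M(x) = max_{n ≤ x} log f(f(n))` and `C_g = (8·∑_{j≥1} (log(g(j)/g(j−1)))²)^{1/2}`. -/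
theorem maxOrder_lower_bound
    (q : ℕ → ℕ) (g f gdag : ℕ → ℕ) (κ cstar cf cdag ε : ℝ) (α : ℕ)
    (hα : 1 ≤ α)
    -- `g(ν) = α·ν + 1`
    (hgα : ∀ ν : ℕ, g ν = α * ν + 1)
    -- the strictly increasing sequence of primes `q_1 < q_2 < …` with its asymptotics (A.1)
    (hqprime : ∀ j : ℕ, 1 ≤ j → (q j).Prime)
    (hqmono : ∀ j : ℕ, 1 ≤ j → q j < q (j + 1))
    (hκ : 0 < κ)
    (hqasymp : ∃ A : ℝ, ∀ j : ℕ, 2 ≤ j →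
      |(q j : ℝ) - κ * j * (Real.log j + Real.log (Real.log j))| ≤ A * (κ * j))
    -- `g` is monotonically increasing with `g(0) = 1` (A.2)
    (hg0 : g 0 = 1) (hgmono : Monotone g)
    -- the image of `g` contains the monoid `⟨Q⟩` generated by `Q = {q_j : j ≥ 1}` (A.3)
    (hgrange : ∀ m : ℕ, 0 < m → (∀ p : ℕ, p.Prime → p ∣ m → ∃ j, 1 ≤ j ∧ q j = p) →
      ∃ x : ℕ, g x = m)
    -- `gdag` is the pseudo-inverse `g†`
    (hgdagdef : ∀ y : ℕ, gdag y = sInf {x : ℕ | 0 < x ∧ g x = y})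
    -- the superadditivity assumption (A.4)
    (hcstar : 1 / (q 1 : ℝ) < cstar)
    (hsuper : ∀ a b : ℕ,
      (∀ p : ℕ, p.Prime → p ∣ a → ∃ j, 1 ≤ j ∧ q j = p) →
      (∀ p : ℕ, p.Prime → p ∣ b → ∃ j, 1 ≤ j ∧ q j = p) →
      q 1 ≤ a → a ≤ b →
      (gdag b : ℝ) + cstar * b * gdag a ≤ gdag (a * b))
    -- the growth assumption `g(i)/g(i−1) = 1 + O(i^{−1/2−ε})` (A.5)
    (hε : 0 < ε)
    (hgratio : ∃ B : ℝ, ∀ i : ℕ, 1 ≤ i →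
      |(g i : ℝ) / (g (i - 1) : ℝ) - 1| ≤ B * (i : ℝ) ^ (-(1 / 2 : ℝ) - ε))
    -- the sublinearity assumption `g(x) ≤ c_f·x` (A.6)
    (hcf : 0 < cf)
    (hgsub : ∀ x : ℕ, 1 ≤ x → (g x : ℝ) ≤ cf * x)
    -- the assumption `g†(q) = c_†·q + O(q/log q)` for `q ∈ Q` (A.7)
    (hcdag : 0 < cdag)
    (hgdagasymp : ∃ B : ℝ, ∀ j : ℕ, 1 ≤ j →
      |(gdag (q j) : ℝ) - cdag * q j| ≤ B * (q j : ℝ) / Real.log (q j))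
    -- `f` is multiplicative with `f(p^ν) = g(ν)` for `p ∈ Q`, `f(p^ν) ∈ {0,1}` otherwise
    (hf0 : f 0 = 1) (hf1 : f 1 = 1)
    (hfmult : ∀ m₁ m₂ : ℕ, Nat.Coprime m₁ m₂ → f (m₁ * m₂) = f m₁ * f m₂)
    (hfQ : ∀ p ν : ℕ, p.Prime → (∃ j, 1 ≤ j ∧ q j = p) → 1 ≤ ν → f (p ^ ν) = g ν)
    (hfnotQ : ∀ p ν : ℕ, p.Prime → ¬(∃ j, 1 ≤ j ∧ q j = p) → 1 ≤ ν →
      f (p ^ ν) = 0 ∨ f (p ^ ν) = 1) :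
    ∃ C : ℝ, 0 < C ∧ ∀ᶠ x : ℕ in atTop,
      Real.sqrt (Real.log x) / Real.log (Real.log x) *
          (Real.sqrt (8 * ∑' j : ℕ, (Real.log ((g (j + 1) : ℝ) / (g j : ℝ))) ^ 2) /
              Real.sqrt (κ / α) -
            C * (Real.log (Real.log (Real.log x)) / Real.log (Real.log x))) ≤
        ⨆ n ∈ Finset.Icc 1 x, Real.log (f (f n)) := by
  obtain ⟨A, hA⟩ := hqasymp
  have hmono : StrictMono fun j => q (j + 1) :=
    strictMono_nat_of_lt_succ fun j => hqmono (j + 1) (by omega)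
  have hprime (j : ℕ) : (q (j + 1)).Prime := hqprime (j + 1) (by omega)
  have hf : IsMultiplicativeAlong f (fun j => q (j + 1)) g :=
    isMultiplicativeAlong_of_prime hprime hmono.injective hg0 hf1 hfmult
      fun j ν => hfQ _ ν (hprime j) ⟨j + 1, by omega, rfl⟩
  refine maxOrder_lower_bound_general (A := A) hκ (isLogConcaveLinear_of_affine hα hgα hgsub) hf
    (fun j => hgrange _ (hprime j).pos fun p hp hpq =>
      ⟨j + 1, by omega, ((Nat.prime_dvd_prime_iff_eq hp (hprime j)).1 hpq).symm⟩)
    fun j hj => ?_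
  linarith [(abs_le.1 (hA (j + 1) (by omega))).2]
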